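/- Let r = p/q be a rational function that is real on ℝ with deg p ≤ deg q (so that r is bounded at infinity). Then there exist rational functions r₊ and r₋ such that: the set of poles of r₊ is precisely the set of poles of r lying in C₋; the set of poles of r₋ is precisely the set of poles of r lying in C₊; r(z) = (r₊(z) + r₋(z))/2 for all z ∈ ℂ that are not poles of r; r₋(z) = conj(r₊(conj z)) for all such z; and r(x) = Re r₊(x) for all x ∈ ℝ. -/

import Mathlib

open Polynomial

/-- Coefficientwise complex conjugation of a polynomial. -/
noncomputable def pconj (p : Polynomial ℂ) : Polynomial ℂ := p.map (starRingEnd ℂ)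

theorem pconj_pconj (p : Polynomial ℂ) : pconj (pconj p) = p := by
  ext n; simp [pconj]

theorem pconj_mul (p q : Polynomial ℂ) : pconj (p * q) = pconj p * pconj q := by
  simp [pconj]

theorem pconj_add (p q : Polynomial ℂ) : pconj (p + q) = pconj p + pconj q := by
  simp [pconj]

theorem pconj_eval (p : Polynomial ℂ) (z : ℂ) :
    (pconj p).eval z = (starRingEnd ℂ) (p.eval ((starRingEnd ℂ) z)) := by
  have h := Polynomial.eval_map_apply (f := starRingEnd ℂ) (p := p) ((starRingEnd ℂ) z)
  simpa [pconj] using h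

theorem eq_of_eval_real (p q : Polynomial ℂ)
    (h : ∀ x : ℝ, p.eval (x : ℂ) = q.eval (x : ℂ)) : p = q := by
  apply Polynomial.eq_of_infinite_eval_eq
  apply (Set.infinite_range_of_injective Complex.ofReal_injective).mono
  rintro _ ⟨x, rfl⟩
  exact h x

theorem cross_conj (p q : Polynomial ℂ)
    (hnopole : ∀ x : ℝ, q.eval (x : ℂ) ≠ 0)
    (hreal : ∀ x : ℝ, (p.eval (x : ℂ) / q.eval (x : ℂ)).im = 0) :
    pconj p * q = p * pconj q := by
  apply eq_of_eval_real
  intro x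
  have h := Complex.conj_eq_iff_im.mpr (hreal x)
  have h0 := hnopole x
  have h1 : (starRingEnd ℂ) (q.eval (x : ℂ)) ≠ 0 := by simpa using h0
  rw [map_div₀, div_eq_div_iff h1 h0] at h
  simpa [pconj_eval] using h

theorem factor_conj (p q : Polynomial ℂ) (hq : q ≠ 0) (hcop : IsCoprime p q)
    (hnopole : ∀ x : ℝ, q.eval (x : ℂ) ≠ 0) (hc : pconj p * q = p * pconj q) :
    ∃ (c : ℂ) (a : Polynomial ℂ), c ≠ 0 ∧ q = C c * (a * pconj a) ∧ a ≠ 0 ∧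
      ∀ z, a.eval z = 0 ↔ (q.eval z = 0 ∧ z.im < 0) := by
  have h1 : q ∣ pconj q :=
    hcop.symm.dvd_of_dvd_mul_left (hc ▸ Dvd.intro_left _ rfl)
  have h2 : pconj q ∣ q := by
    obtain ⟨k, hk⟩ := h1
    refine ⟨pconj k, ?_⟩
    rw [← pconj_mul, ← hk, pconj_pconj]
  have hroots : q.roots.map (starRingEnd ℂ) = q.roots := by
    have h3 : (pconj q).roots = q.roots.map (starRingEnd ℂ) :=
      (IsAlgClosed.splits q).roots_map _
    rw [← h3]
    have hq' : pconj q ≠ 0 := fun h => hq (by simpa [h] using h2)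
    exact le_antisymm (Polynomial.roots.le_of_dvd hq h2) (Polynomial.roots.le_of_dvd hq' h1)
  set a : Polynomial ℂ := ((q.roots.filter (fun z => z.im < 0)).map (fun z => X - C z)).prod with ha
  have hconj : pconj a = ((q.roots.filter (fun z => ¬ z.im < 0)).map (fun z => X - C z)).prod := by
    have e : (q.roots.filter (fun z => ¬ z.im < 0)) =
        (q.roots.filter (fun z => z.im < 0)).map (starRingEnd ℂ) := by
      conv_lhs => rw [← hroots]
      rw [Multiset.filter_map]
      congr 1
      apply Multiset.filter_congr
      intro z hz
      have hz0 : z.im ≠ 0 := by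
        intro h
        have hr : q.eval z = 0 := (Polynomial.mem_roots hq).1 hz
        apply hnopole z.re
        rwa [show ((z.re : ℝ) : ℂ) = z from Complex.ext (by simp) (by simp [h])]
      simp only [Function.comp, Complex.conj_im, not_lt]
      constructor
      · intro h
        exact lt_of_le_of_ne (by linarith) hz0
      · intro h; linarith
    rw [e, ha, pconj, Polynomial.map_multiset_prod, Multiset.map_map, Multiset.map_map]
    simp
  refine ⟨q.leadingCoeff, a, by simpa using hq, ?_, ?_, ?_⟩
  · rw [hconj, ha, ← Multiset.prod_add, ← Multiset.map_add, Multiset.filter_add_not]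
    exact (IsAlgClosed.splits q).eq_prod_roots
  · exact (Polynomial.monic_multiset_prod_of_monic _ _ (fun z _ => monic_X_sub_C z)).ne_zero
  · intro z
    rw [ha, Polynomial.eval_multiset_prod, Multiset.prod_eq_zero_iff]
    simp only [Multiset.mem_map, Multiset.mem_filter, mem_roots hq, IsRoot.def]
    constructor
    · rintro ⟨_, ⟨w, ⟨hw, hi⟩, rfl⟩, h⟩
      have : z = w := by simpa [sub_eq_zero] using h
      exact this ▸ ⟨hw, hi⟩
    · intro h
      exact ⟨_, ⟨z, h, rfl⟩, by simp⟩

theorem isCoprime_of_no_common_root {a b : Polynomial ℂ}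
    (h : ∀ z, a.eval z = 0 → b.eval z = 0 → False) : IsCoprime a b := by
  rw [Polynomial.isCoprime_iff_aeval_ne_zero_of_isAlgClosed ℂ ℂ]
  intro z
  by_contra! hh
  simp only [Polynomial.coe_aeval_eq_eval] at hh
  exact h z hh.1 hh.2

theorem no_common_root_of_isCoprime {a b : Polynomial ℂ} (h : IsCoprime a b) (z : ℂ)
    (h1 : a.eval z = 0) (h2 : b.eval z = 0) : False := by
  obtain ⟨s, t, h⟩ := h
  have := congrArg (eval z) h
  simp [h1, h2] at this

/-- a rational function `r = p/q` (coprime, `q ≠ 0`), real on `ℝ` and with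
`deg p ≤ deg q` (bounded at infinity), splits as `r = (r₊ + r₋)/2` where the poles of
`r₊` are precisely the poles of `r` in the lower half-plane, the poles of `r₋` are
precisely the poles of `r` in the upper half-plane, `r₋(z) = conj (r₊ (conj z))` away
from the poles of `r`, and `r(x) = Re r₊(x)` for all real `x`. -/
theorem statement_8
    (p q : Polynomial ℂ) (hq : q ≠ 0) (hcop : IsCoprime p q)
    (hnopole : ∀ x : ℝ, q.eval (x : ℂ) ≠ 0)
    (hreal : ∀ x : ℝ, (p.eval (x : ℂ) / q.eval (x : ℂ)).im = 0)
    (hdeg : p.degree ≤ q.degree) :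
    ∃ pp qp pm qm : Polynomial ℂ,
      qp ≠ 0 ∧ qm ≠ 0 ∧ IsCoprime pp qp ∧ IsCoprime pm qm ∧
      {z : ℂ | qp.eval z = 0} = {z : ℂ | q.eval z = 0 ∧ z.im < 0} ∧
      {z : ℂ | qm.eval z = 0} = {z : ℂ | q.eval z = 0 ∧ 0 < z.im} ∧
      (∀ z : ℂ, q.eval z ≠ 0 →
        p.eval z / q.eval z = (pp.eval z / qp.eval z + pm.eval z / qm.eval z) / 2 ∧
        pm.eval z / qm.eval z =
          (starRingEnd ℂ) (pp.eval ((starRingEnd ℂ) z) / qp.eval ((starRingEnd ℂ) z))) ∧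
      (∀ x : ℝ, p.eval (x : ℂ) / q.eval (x : ℂ) =
        (((pp.eval (x : ℂ) / qp.eval (x : ℂ)).re : ℝ) : ℂ)) := by
  have hc := cross_conj p q hnopole hreal
  obtain ⟨c, a, hc0, hqa, ha0, hroot⟩ := factor_conj p q hq hcop hnopole hc
  have hz0 : ∀ z, q.eval z = 0 → z.im ≠ 0 := by
    intro z hr h
    apply hnopole z.re
    rwa [show ((z.re : ℝ) : ℂ) = z from Complex.ext (by simp) (by simp [h])]
  have hb0 : pconj a ≠ 0 := by
    intro h; rw [h] at hqa; simp at hqa; exact hq hqa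
  have hrootb : ∀ z, (pconj a).eval z = 0 ↔ (q.eval z = 0 ∧ 0 < z.im) := by
    intro z
    constructor
    · intro h
      refine ⟨by rw [hqa]; simp [h], ?_⟩
      rw [pconj_eval, map_eq_zero, hroot] at h
      have := h.2
      simp at this
      exact this
    · rintro ⟨h, hi⟩
      have h' := h
      rw [hqa] at h
      simp only [eval_mul, eval_C, mul_eq_zero, hc0, false_or] at h
      rcases h with h | h
      · have := ((hroot z).1 h).2
        linarith
      · exact h
  have hcopab : IsCoprime a (pconj a) := by
    apply isCoprime_of_no_common_root
    intro z h1 h2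
    have := ((hroot z).1 h1).2
    have := ((hrootb z).1 h2).2
    linarith
  obtain ⟨u, v, huv⟩ := hcopab
  obtain ⟨p', hp'⟩ : ∃ p', p = C c * p' :=
    ⟨C c⁻¹ * p, by rw [← mul_assoc, ← C_mul, mul_inv_cancel₀ hc0]; simp⟩
  have hCc : (C c : Polynomial ℂ) ≠ 0 := by simpa using hc0
  have hCc' : pconj (C c) ≠ 0 := by simpa [pconj] using hc0
  have hpr : pconj p' = p' := by
    rw [hp', hqa] at hc
    simp only [pconj_mul, pconj_pconj] at hc
    have : (C c * pconj (C c) * (a * pconj a)) * (pconj p' - p') = 0 := by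
      linear_combination hc
    rcases mul_eq_zero.1 this with h | h
    · exact absurd h (mul_ne_zero (mul_ne_zero hCc hCc') (mul_ne_zero ha0 hb0))
    · exact sub_eq_zero.1 h
  -- `w / a` is the sought `r₊`
  obtain ⟨w, hw⟩ : ∃ w, 2 * p' = w * pconj a + pconj w * a := by
    refine ⟨p' * v + pconj (p' * u), ?_⟩
    have h2 : pconj u * pconj a + pconj v * a = 1 := by
      have := congrArg pconj huv
      simp only [pconj_add, pconj_mul, pconj_pconj] at this
      simpa [pconj] using this
    simp only [pconj_add, pconj_mul, pconj_pconj, hpr]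
    linear_combination (-p') * huv - p' * h2
  have hcopw : IsCoprime w a := by
    rw [isCoprime_comm]
    apply isCoprime_of_no_common_root
    intro z h1 h2
    apply no_common_root_of_isCoprime hcop z
    · have := congrArg (eval z) hw
      simp [h1, h2] at this
      simp [hp', this]
    · exact ((hroot z).1 h1).1
  have hev : ∀ z, q.eval z ≠ 0 →
        p.eval z / q.eval z = (w.eval z / a.eval z + (pconj w).eval z / (pconj a).eval z) / 2 := by
    intro z hz
    have h1 : a.eval z ≠ 0 := fun h => hz ((hroot z).1 h).1
    have h2 : (pconj a).eval z ≠ 0 := fun h => hz ((hrootb z).1 h).1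
    have := congrArg (eval z) hw
    simp only [eval_mul, eval_add, eval_ofNat] at this
    rw [hp', hqa]
    simp only [eval_mul, eval_C]
    field_simp
    linear_combination this
  refine ⟨w, a, pconj w, pconj a, ha0, hb0, hcopw, ?_, ?_, ?_, ?_, ?_⟩
  · obtain ⟨s, t, h⟩ := hcopw
    refine ⟨pconj s, pconj t, ?_⟩
    rw [← pconj_mul, ← pconj_mul, ← pconj_add, h]
    simp [pconj]
  · ext z; exact hroot z
  · ext z; exact hrootb z
  · intro z hz
    refine ⟨hev z hz, ?_⟩
    rw [pconj_eval, pconj_eval, map_div₀]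
  · intro x
    rw [hev x (hnopole x), pconj_eval, pconj_eval, ← map_div₀, Complex.conj_ofReal,
      Complex.add_conj]
    push_cast
    ring
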